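/- arXiv:1809.09581 — 2 statements merged into one kernel-verified Lean document; each statement's English description precedes it below -/
import Mathlib

section
/- Suppose the potential q is even on [0,a], i.e. q(a−x) = q(x) for all x ∈ [0,a]. Then for every λ ∈ ℂ, C(a) = 2·C(a/2)·S'(a/2) − 1 and C(a) = 1 + 2·S(a/2)·C'(a/2). -/
/-! Reflecting a solution `y` about the midpoint of `[0, a]` gives a second solution
`R x = y (a - x)`, because the potential is even. The Wronskians of the pairs `(y, S)` and `(R, S)`
are constant, with values `y 0` and `y a` at `0`. At `a / 2`, where `R` agrees with `y` and `R'`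
with `-y'`, they read `y S' - y' S = y 0` and `y S' + y' S = y a`; adding and subtracting gives the
two identities, and `C` is a solution with `C 0 = 1`. -/

theorem hasDerivWithinAt_comp_const_sub {𝕜 F : Type*} [NontriviallyNormedField 𝕜]
    [NormedAddCommGroup F] [NormedSpace 𝕜 F] {f : 𝕜 → F} {f' : F} {s t : Set 𝕜} {c x : 𝕜}
    (hf : HasDerivWithinAt f f' t (c - x)) (hst : Set.MapsTo (c - ·) s t) :
    HasDerivWithinAt (fun x => f (c - x)) (-f') s x := by
  simpa [Function.comp_def] using hf.scomp x ((hasDerivWithinAt_id x s).const_sub c) hst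

section Solutions

variable {𝕜 A : Type*} [NontriviallyNormedField 𝕜] [NormedCommRing A] [NormedAlgebra 𝕜 A]

/-- `y` is a solution on `s` of the linear equation `y'' = p y`, with derivative `dy`; the equation
`-y'' + q y = lam y` is the case `p = q - lam`. Derivatives are taken within `s`, hence one-sided at
the endpoints of a real interval. -/
structure IsSchrodingerSolutionOn (p : 𝕜 → A) (s : Set 𝕜) (y dy : 𝕜 → A) : Prop where
  hasDerivWithinAt : ∀ x ∈ s, HasDerivWithinAt y (dy x) s x
  hasDerivWithinAt_deriv : ∀ x ∈ s, HasDerivWithinAt dy (p x * y x) s x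

/-- The Wronskian `u v' - u' v` of two functions, the derivatives `du` and `dv` being given as
separate arguments. -/
def wronskian (u du v dv : 𝕜 → A) (x : 𝕜) : A :=
  u x * dv x - du x * v x

variable {p u du v dv : 𝕜 → A} {s : Set 𝕜} {c x : 𝕜}

namespace IsSchrodingerSolutionOn

theorem hasDerivWithinAt_wronskian (hu : IsSchrodingerSolutionOn p s u du)
    (hv : IsSchrodingerSolutionOn p s v dv) (hx : x ∈ s) :
    HasDerivWithinAt (wronskian u du v dv) 0 s x := by
  refine (((hu.hasDerivWithinAt x hx).mul (hv.hasDerivWithinAt_deriv x hx)).sub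
    ((hu.hasDerivWithinAt_deriv x hx).mul (hv.hasDerivWithinAt x hx))).congr_deriv ?_
  ring

theorem comp_const_sub (hu : IsSchrodingerSolutionOn p s u du) (hs : Set.MapsTo (c - ·) s s)
    (hp : ∀ x ∈ s, p (c - x) = p x) :
    IsSchrodingerSolutionOn p s (fun x => u (c - x)) (fun x => -du (c - x)) where
  hasDerivWithinAt x hx := hasDerivWithinAt_comp_const_sub (hu.hasDerivWithinAt _ (hs hx)) hs
  hasDerivWithinAt_deriv x hx := by
    simpa only [neg_neg, hp x hx] using
      (hasDerivWithinAt_comp_const_sub (hu.hasDerivWithinAt_deriv _ (hs hx)) hs).fun_neg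

end IsSchrodingerSolutionOn

end Solutions

section Convex

variable {𝕜 A : Type*} [RCLike 𝕜] [NormedCommRing A] [NormedAlgebra 𝕜 A]
  {p : 𝕜 → A} {s : Set 𝕜}

theorem IsSchrodingerSolutionOn.wronskian_eq {u du v dv : 𝕜 → A} {x y : 𝕜}
    (hu : IsSchrodingerSolutionOn p s u du) (hv : IsSchrodingerSolutionOn p s v dv)
    (hs : Convex ℝ s) (hx : x ∈ s) (hy : y ∈ s) :
    wronskian u du v dv x = wronskian u du v dv y := by
  have hbound := hs.norm_image_sub_le_of_norm_hasDerivWithin_le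
    (fun _ => hu.hasDerivWithinAt_wronskian hv) (fun _ _ => norm_zero.le) hy hx
  simpa [sub_eq_zero] using hbound

theorem even_potential_C_half_identities_general {a : 𝕜} {y dy S Sd : 𝕜 → A}
    (hs : Convex ℝ s) (h0 : 0 ∈ s) (hreflect : Set.MapsTo (a - ·) s s)
    (hp : ∀ x ∈ s, p (a - x) = p x)
    (hy : IsSchrodingerSolutionOn p s y dy) (hS : IsSchrodingerSolutionOn p s S Sd)
    (hS0 : S 0 = 0) (hSd0 : Sd 0 = 1) :
    y a = 2 * y (a / 2) * Sd (a / 2) - y 0 ∧ y a = y 0 + 2 * S (a / 2) * dy (a / 2) := by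
  have hmid : a / 2 ∈ s := by
    have ha : a ∈ s := by simpa using hreflect h0
    simpa [midpoint_eq_smul_add, Algebra.smul_def, div_eq_inv_mul, map_ofNat (algebraMap ℝ 𝕜)]
      using hs.midpoint_mem h0 ha
  have hR : IsSchrodingerSolutionOn p s (fun x => y (a - x)) (fun x => -dy (a - x)) :=
    hy.comp_const_sub hreflect hp
  have hyS : y (a / 2) * Sd (a / 2) - dy (a / 2) * S (a / 2) = y 0 := by
    simpa [wronskian, hS0, hSd0] using hy.wronskian_eq hS hs hmid h0
  have hRS : y (a / 2) * Sd (a / 2) + dy (a / 2) * S (a / 2) = y a := by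
    simpa [wronskian, hS0, hSd0, sub_half] using hR.wronskian_eq hS hs hmid h0
  constructor
  · linear_combination -hRS - hyS
  · linear_combination -hRS + hyS

end Convex

/-- Magnus–Winkler identity for even potentials: if `q` is even on `[0,a]`,
then the cosine-like solution `C` of `−y'' + q y = λ y` (with `C(0)=1`,
`C'(0)=0`) satisfies `C(a) = 2 C(a/2) S'(a/2) − 1 = 1 + 2 S(a/2) C'(a/2)`,
where `S` is the sine-like solution (`S(0)=0`, `S'(0)=1`). -/
theorem even_potential_C_half_identities
    (a : ℝ) (ha : 0 < a) (q : ℝ → ℝ) (hq : ContinuousOn q (Set.Icc 0 a))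
    (hqeven : ∀ x ∈ Set.Icc 0 a, q (a - x) = q x)
    (lam : ℂ) (C S Cd Sd : ℝ → ℂ)
    (hC : ∀ x ∈ Set.Icc 0 a, HasDerivWithinAt C (Cd x) (Set.Icc 0 a) x)
    (hC' : ∀ x ∈ Set.Icc 0 a,
      HasDerivWithinAt Cd ((q x : ℂ) * C x - lam * C x) (Set.Icc 0 a) x)
    (hS : ∀ x ∈ Set.Icc 0 a, HasDerivWithinAt S (Sd x) (Set.Icc 0 a) x)
    (hS' : ∀ x ∈ Set.Icc 0 a,
      HasDerivWithinAt Sd ((q x : ℂ) * S x - lam * S x) (Set.Icc 0 a) x)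
    (hC0 : C 0 = 1) (hCd0 : Cd 0 = 0) (hS0 : S 0 = 0) (hSd0 : Sd 0 = 1) :
    C a = 2 * C (a / 2) * Sd (a / 2) - 1 ∧
    C a = 1 + 2 * S (a / 2) * Cd (a / 2) := by
  simpa only [hC0] using even_potential_C_half_identities_general (p := fun x => (q x : ℂ) - lam)
    (convex_Icc 0 a) (Set.left_mem_Icc.2 ha.le) (fun _ => Set.sub_mem_Icc_zero_iff_right.2)
    (fun x hx => by rw [hqeven x hx]) ⟨hC, by simpa only [sub_mul] using hC'⟩
    ⟨hS, by simpa only [sub_mul] using hS'⟩ hS0 hSd0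
end

section
/- Let θ1, θ2 ∈ ℝ and set α̃ = exp(i·θ1), β = exp(−i·θ2). For j = 1, ..., 5 let c_j, s_j, c_j', s_j' be complex numbers satisfying c_j·s_j' − s_j·c_j' = 1. Then there exists a nonzero vector (A1, ..., A5, B1, ..., B5) ∈ ℂ¹⁰ satisfying the homogeneous system: A1·c1 + B1·s1 = A2·c2 + B2·s2 = α̃·A2 = A3·c3 + B3·s3 = A4·c4 + B4·s4; (A1·c1' + B1·s1') + (A2·c2' + B2·s2') − α̃·B2 + (A3·c3' + B3·s3') + (A4·c4' + B4·s4') = 0; A4 = A5·c5 + B5·s5 = α̃·A3 = α̃·A5 = α̃·β·A1; and B4 − (A5·c5' + B5·s5') + α̃·B3 + α̃·B5 + α̃·β·B1 = 0, if and only if Ψ = 0, where Ψ = (s1'·s2·s3·s4 + s1·s2'·s3·s4 + s1·s2·s3'·s4 + s1·s2·s3·s4')·(c5 + s5' − 2·cos(θ1)) + (c1·s3·s4·s5 + c3·s1·s4·s5 + c4·s1·s3·s5 + c5·s1·s3·s4)·(s2' + c2 − 2·cos(θ1)) + s1·s2·s5·(c4'·s3 + c4·s3' + c3'·s4 + c3·s4'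 − 2·cos(θ1)) + s2·s3·s5·(c1'·s4 + c1·s4' + s1'·c4 − 2·cos(θ1−θ2)) + s2·s4·s5·(s1'·c3 + c1·s3' − 2·cos(θ2)) + s1·s3·s4·(c2·s5' − s2'·c5 − 2·(c2 + s5')·cos(θ1) + 4·cos²(θ1)). (This is the characteristic function of the periodic quantum graph associated with the elongated triangular tiling, with possibly distinct, possibly non-even edge potentials.) -/
/-!
A solution is determined by its values at the two classes of vertices and by its initial slopes on
the five edges. Where no `s` vanishes, the slopes can be eliminated, which leaves a `2 × 2` system.
Keeping the slopes as unknowns instead gives a `7 × 7` determinant, which the Lagrange identities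
turn into `α² β Ψ`; no division by an `s` occurs, so Dirichlet eigenvalues need no separate
treatment.

Modulo the periods, edges 2 and 5 are loops, while edges 1, 3 and 4 join the two classes of
vertices. This is the shape of `Ψ`: in each term, a loop either contributes its Hill discriminant,
and the edges 1, 3, 4 see a Dirichlet condition at its vertex, or it contributes its `s`, and they
see a Neumann condition there.
-/

namespace ElongatedTriangularTiling

/-- The entries of the transfer matrix of an edge: the values `c`, `s` and the derivatives `c'`,
`s'`, at the end of the edge, of the cosine-like and sine-like solutions, tied by the Lagrange
identity. -/
structure EdgeTransfer (R : Type*) [CommRing R] where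
  c : R
  s : R
  c' : R
  s' : R
  wronskian : c * s' - s * c' = 1

section CommRing

variable {R : Type*} [CommRing R]

/-- The Dirichlet–Dirichlet characteristic function of three parallel edges. -/
def bundleDD (e f g : EdgeTransfer R) : R := e.s * f.s * g.s

/-- The characteristic function of three parallel edges with a Neumann (Kirchhoff) condition at
their start and a Dirichlet condition at their end. -/
def bundleND (e f g : EdgeTransfer R) : R :=
  e.c * f.s * g.s + e.s * f.c * g.s + e.s * f.s * g.c

/-- The characteristic function of three parallel edges with a Dirichlet condition at their start
and a Neumann (Kirchhoff) condition at their end. -/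
def bundleDN (e f g : EdgeTransfer R) : R :=
  e.s' * f.s * g.s + e.s * f.s' * g.s + e.s * f.s * g.s'

-- Eliminating the slope of edge `j` adds a matrix of rank one with denominator `sⱼ` to the `2 × 2`
-- system, so its determinant has no `sⱼ²` in the denominator and the last summand is a polynomial.
theorem det_bundle_with_loops
    (d₂ x₂ y₂ k₂ d₅ x₅ y₅ k₅ a m s₁ s₃ s₄ t₁ t₃ t₄ r₁ r₃ r₄ q₁ q₃ q₄ : R) :
    !![d₂, x₂, 0, 0, 0, 0, 0;
       y₂, k₂, t₁, t₃, t₄, m, 0;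
       0, -a, s₁, 0, 0, r₁, 0;
       0, -a, 0, s₃, 0, r₃, 0;
       0, -a, 0, 0, s₄, r₄, 0;
       0, 0, -q₁, -q₃, -q₄, k₅, y₅;
       0, 0, 0, 0, 0, x₅, d₅].det =
      (d₂ * k₂ - x₂ * y₂) * (d₅ * k₅ - x₅ * y₅) * (s₁ * s₃ * s₄)
      + (d₂ * k₂ - x₂ * y₂) * d₅ *
        (q₁ * r₁ * s₃ * s₄ + s₁ * (q₃ * r₃) * s₄ + s₁ * s₃ * (q₄ * r₄))
      + d₂ * (d₅ * k₅ - x₅ * y₅) * (a * (t₁ * s₃ * s₄ + s₁ * t₃ * s₄ + s₁ * s₃ * t₄))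
      + d₂ * d₅ * (a * (m * (q₁ * s₃ * s₄ + s₁ * q₃ * s₄ + s₁ * s₃ * q₄)
        + s₁ * ((t₃ * q₄ - t₄ * q₃) * (r₄ - r₃))
        + s₃ * ((t₁ * q₄ - t₄ * q₁) * (r₄ - r₁))
        + s₄ * ((t₁ * q₃ - t₃ * q₁) * (r₃ - r₁)))) := by
  simp [Matrix.det_succ_row_zero, Fin.sum_univ_succ, Fin.succAbove]
  ring

end CommRing

variable {K : Type*} [Field K]

/-- The Hill discriminant of an edge closed up to a loop with Floquet multiplier `z`; it vanishes
exactly when the edge carries a nonzero solution with multiplier `z`, and `z = exp (iθ)`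
makes `z + z⁻¹` equal to `2 cos θ`. -/
def hillDiscriminant (z : K) (e : EdgeTransfer K) : K := e.c + e.s' - (z + z⁻¹)

/-- The Neumann–Neumann characteristic function of three parallel edges, where the values at the
start of `e`, `f`, `g` carry the phases `1`, `y`, `x * y`. -/
def bundleNN (x y : K) (e f g : EdgeTransfer K) : K :=
  e.c' * f.s * g.s + e.s * f.c' * g.s + e.s * f.s * g.c'
    + e.s * (f.c * g.s' + f.s' * g.c - (x + x⁻¹))
    + f.s * (e.c * g.s' + e.s' * g.c - (x * y + (x * y)⁻¹))
    + g.s * (e.c * f.s' + e.s' * f.c - (y + y⁻¹))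

/-- The characteristic function `Ψ` for the Floquet multipliers `α` and `β`, organised by whether
each of the loops `e₂` and `e₅` enters through its Hill discriminant or through its `s`. -/
def characteristicFunction (α β : K) (e₁ e₂ e₃ e₄ e₅ : EdgeTransfer K) : K :=
  hillDiscriminant α e₂ * hillDiscriminant α e₅ * bundleDD e₁ e₃ e₄
    + hillDiscriminant α e₂ * e₅.s * bundleND e₁ e₃ e₄
    + e₂.s * hillDiscriminant α e₅ * bundleDN e₁ e₃ e₄
    + e₂.s * e₅.s * bundleNN α β e₁ e₃ e₄

/-- The continuity, Kirchhoff and quasiperiodicity conditions for the function that equals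
`A * C + B * S` on each edge, with `C` and `S` the fundamental solutions of that edge. -/
def VertexConditions (α β : K) (e₁ e₂ e₃ e₄ e₅ : EdgeTransfer K)
    (A₁ A₂ A₃ A₄ A₅ B₁ B₂ B₃ B₄ B₅ : K) : Prop :=
  A₁ * e₁.c + B₁ * e₁.s = A₂ * e₂.c + B₂ * e₂.s ∧
  A₂ * e₂.c + B₂ * e₂.s = α * A₂ ∧
  α * A₂ = A₃ * e₃.c + B₃ * e₃.s ∧
  A₃ * e₃.c + B₃ * e₃.s = A₄ * e₄.c + B₄ * e₄.s ∧
  (A₁ * e₁.c' + B₁ * e₁.s') + (A₂ * e₂.c' + B₂ * e₂.s') - α * B₂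
    + (A₃ * e₃.c' + B₃ * e₃.s') + (A₄ * e₄.c' + B₄ * e₄.s') = 0 ∧
  A₄ = A₅ * e₅.c + B₅ * e₅.s ∧
  A₅ * e₅.c + B₅ * e₅.s = α * A₃ ∧
  α * A₃ = α * A₅ ∧
  α * A₅ = α * β * A₁ ∧
  B₄ - (A₅ * e₅.c' + B₅ * e₅.s') + α * B₃ + α * B₅ + α * β * B₁ = 0

/-- The matrix of the vertex conditions in the unknowns `B₂, A₂, B₁, B₃, B₄, A₁, B₅`, after
eliminating `A₃ = A₅ = β A₁` and `A₄ = α β A₁`. The two Kirchhoff conditions are rows 1 and 5. -/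
def vertexMatrix (α β : K) (e₁ e₂ e₃ e₄ e₅ : EdgeTransfer K) : Matrix (Fin 7) (Fin 7) K :=
  !![e₂.s, e₂.c - α, 0, 0, 0, 0, 0;
     e₂.s' - α, e₂.c', e₁.s', e₃.s', e₄.s', e₁.c' + β * e₃.c' + α * β * e₄.c', 0;
     0, -α, e₁.s, 0, 0, e₁.c, 0;
     0, -α, 0, e₃.s, 0, β * e₃.c, 0;
     0, -α, 0, 0, e₄.s, α * β * e₄.c, 0;
     0, 0, -(α * β), -α, -1, β * e₅.c', e₅.s' - α;
     0, 0, 0, 0, 0, β * (e₅.c - α), e₅.s]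

theorem vertexConditions_iff {α β : K} (hα : α ≠ 0) {e₁ e₂ e₃ e₄ e₅ : EdgeTransfer K}
    {A₁ A₂ A₃ A₄ A₅ B₁ B₂ B₃ B₄ B₅ : K} :
    VertexConditions α β e₁ e₂ e₃ e₄ e₅ A₁ A₂ A₃ A₄ A₅ B₁ B₂ B₃ B₄ B₅ ↔
      A₃ = β * A₁ ∧ A₄ = α * β * A₁ ∧ A₅ = β * A₁ ∧
        (vertexMatrix α β e₁ e₂ e₃ e₄ e₅).mulVec ![B₂, A₂, B₁, B₃, B₄, A₁, B₅] = 0 := by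
  simp only [VertexConditions, vertexMatrix, Matrix.cons_mulVec, Matrix.empty_mulVec,
    Matrix.cons_dotProduct, Matrix.dotProduct_of_isEmpty, Matrix.cons_eq_zero_iff,
    Matrix.head_cons, Matrix.tail_cons]
  constructor
  · rintro ⟨h₁, h₂, h₃, h₄, kirchhoff, h₆, h₇, h₈, h₉, kirchhoff'⟩
    obtain rfl : A₃ = A₅ := mul_left_cancel₀ hα h₈
    obtain rfl : A₃ = β * A₁ := mul_left_cancel₀ hα (by rw [h₉, mul_assoc])
    obtain rfl : A₄ = α * β * A₁ := (h₆.trans h₇).trans (mul_assoc _ _ _).symm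
    refine ⟨rfl, rfl, rfl, ?_, ?_, ?_, ?_, ?_, ?_, ?_, ?_⟩
    · linear_combination h₂
    · linear_combination kirchhoff
    · linear_combination h₁ + h₂
    · linear_combination -h₃
    · linear_combination -h₃ - h₄
    · linear_combination -kirchhoff'
    · linear_combination h₇
    · exact Subsingleton.elim _ _
  · rintro ⟨rfl, rfl, rfl, h₂, kirchhoff, h₁, h₃, h₄, kirchhoff', h₅, -⟩
    refine ⟨?_, ?_, ?_, ?_, ?_, ?_, ?_, rfl, ?_, ?_⟩
    · linear_combination h₁ - h₂
    · linear_combination h₂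
    · linear_combination -h₃
    · linear_combination h₃ - h₄
    · linear_combination kirchhoff
    · linear_combination -h₅
    · linear_combination h₅
    · ring
    · linear_combination -kirchhoff'

theorem mul_hillDiscriminant {z : K} (hz : z ≠ 0) (e : EdgeTransfer K) :
    z * hillDiscriminant z e = e.s * e.c' - (e.c - z) * (e.s' - z) := by
  rw [hillDiscriminant]
  linear_combination e.wronskian - mul_inv_cancel₀ hz

theorem mul_bundleNN {x y : K} (hx : x ≠ 0) (hy : y ≠ 0) (e f g : EdgeTransfer K) :
    x * y * bundleNN x y e f g =
      (e.c' + y * f.c' + x * y * g.c') * (x * y * f.s * g.s + x * e.s * g.s + e.s * f.s)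
        + e.s * ((f.s' - x * g.s') * (x * y * g.c - y * f.c))
        + f.s * ((e.s' - x * y * g.s') * (x * y * g.c - e.c))
        + g.s * ((x * e.s' - x * y * f.s') * (y * f.c - e.c)) := by
  have hxy : x * y * (x * y)⁻¹ = 1 := mul_inv_cancel₀ (mul_ne_zero hx hy)
  rw [bundleNN]
  linear_combination (f.s + x * g.s) * e.wronskian
    + (y * e.s + x * y ^ 2 * g.s) * f.wronskian
    + (x ^ 2 * y * e.s + x ^ 2 * y ^ 2 * f.s) * g.wronskian
    - y * e.s * mul_inv_cancel₀ hx - x * g.s * mul_inv_cancel₀ hy - f.s * hxy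

theorem det_vertexMatrix {α β : K} (hα : α ≠ 0) (hβ : β ≠ 0) (e₁ e₂ e₃ e₄ e₅ : EdgeTransfer K) :
    (vertexMatrix α β e₁ e₂ e₃ e₄ e₅).det =
      α ^ 2 * β * characteristicFunction α β e₁ e₂ e₃ e₄ e₅ := by
  have loop₂ := mul_hillDiscriminant hα e₂
  have loop₅ : e₅.s * (β * e₅.c') - β * (e₅.c - α) * (e₅.s' - α) =
      α * β * hillDiscriminant α e₅ := by
    linear_combination -β * mul_hillDiscriminant hα e₅
  rw [vertexMatrix, det_bundle_with_loops, ← loop₂, loop₅, characteristicFunction, bundleDD,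
    bundleND, bundleDN]
  linear_combination -α * e₂.s * e₅.s * mul_bundleNN hα hβ e₁ e₃ e₄

theorem exp_I_mul_add_inv (θ : ℂ) :
    Complex.exp (Complex.I * θ) + (Complex.exp (Complex.I * θ))⁻¹ = 2 * Complex.cos θ := by
  rw [← Complex.exp_neg, Complex.two_cos, mul_comm, neg_mul]

theorem characteristicFunction_exp (θ1 θ2 : ℝ) (e₁ e₂ e₃ e₄ e₅ : EdgeTransfer ℂ) :
    characteristicFunction (Complex.exp (Complex.I * θ1)) (Complex.exp (-(Complex.I * θ2)))
        e₁ e₂ e₃ e₄ e₅ =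
      (e₁.s' * e₂.s * e₃.s * e₄.s + e₁.s * e₂.s' * e₃.s * e₄.s + e₁.s * e₂.s * e₃.s' * e₄.s
          + e₁.s * e₂.s * e₃.s * e₄.s') * (e₅.c + e₅.s' - 2 * (Real.cos θ1 : ℂ))
      + (e₁.c * e₃.s * e₄.s * e₅.s + e₃.c * e₁.s * e₄.s * e₅.s + e₄.c * e₁.s * e₃.s * e₅.s
          + e₅.c * e₁.s * e₃.s * e₄.s) * (e₂.s' + e₂.c - 2 * (Real.cos θ1 : ℂ))
      + e₁.s * e₂.s * e₅.s * (e₄.c' * e₃.s + e₄.c * e₃.s' + e₃.c' * e₄.s + e₃.c * e₄.s'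
          - 2 * (Real.cos θ1 : ℂ))
      + e₂.s * e₃.s * e₅.s * (e₁.c' * e₄.s + e₁.c * e₄.s' + e₁.s' * e₄.c
          - 2 * (Real.cos (θ1 - θ2) : ℂ))
      + e₂.s * e₄.s * e₅.s * (e₁.s' * e₃.c + e₁.c * e₃.s' - 2 * (Real.cos θ2 : ℂ))
      + e₁.s * e₃.s * e₄.s * (e₂.c * e₅.s' - e₂.s' * e₅.c
          - 2 * (e₂.c + e₅.s') * (Real.cos θ1 : ℂ) + 4 * (Real.cos θ1 : ℂ) ^ 2) := by
  have cos_θ2 := exp_I_mul_add_inv (-θ2)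
  have cos_sub := exp_I_mul_add_inv (θ1 - θ2)
  rw [mul_neg, Complex.cos_neg] at cos_θ2
  rw [mul_sub, sub_eq_add_neg, Complex.exp_add] at cos_sub
  rw [characteristicFunction, bundleNN, cos_sub, cos_θ2]
  simp only [hillDiscriminant, bundleDD, bundleND, bundleDN, exp_I_mul_add_inv,
    Complex.ofReal_cos, Complex.ofReal_sub]
  ring

end ElongatedTriangularTiling

open ElongatedTriangularTiling

theorem elongated_triangular_tiling_characteristic_function_general
    {K : Type*} [Field K] {α β : K} (hα : α ≠ 0) (hβ : β ≠ 0) (e₁ e₂ e₃ e₄ e₅ : EdgeTransfer K) :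
    (∃ A₁ A₂ A₃ A₄ A₅ B₁ B₂ B₃ B₄ B₅ : K,
      (A₁, A₂, A₃, A₄, A₅, B₁, B₂, B₃, B₄, B₅) ≠ (0, 0, 0, 0, 0, 0, 0, 0, 0, 0) ∧
      VertexConditions α β e₁ e₂ e₃ e₄ e₅ A₁ A₂ A₃ A₄ A₅ B₁ B₂ B₃ B₄ B₅) ↔
    characteristicFunction α β e₁ e₂ e₃ e₄ e₅ = 0 := by
  rw [← mul_eq_zero_iff_left (mul_ne_zero (pow_ne_zero 2 hα) hβ), ← det_vertexMatrix hα hβ,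
    ← Matrix.exists_mulVec_eq_zero_iff]
  simp only [vertexConditions_iff hα]
  constructor
  · rintro ⟨A₁, A₂, -, -, -, B₁, B₂, B₃, B₄, B₅, hne, rfl, rfl, rfl, h⟩
    refine ⟨_, fun hv ↦ hne ?_, h⟩
    simp only [Matrix.cons_eq_zero_iff] at hv
    simp [hv]
  · rintro ⟨v, hv, h⟩
    obtain ⟨B₂, A₂, B₁, B₃, B₄, A₁, B₅, rfl⟩ : ∃ B₂ A₂ B₁ B₃ B₄ A₁ B₅,
        v = ![B₂, A₂, B₁, B₃, B₄, A₁, B₅] :=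
      ⟨_, _, _, _, _, _, _, (FinVec.etaExpand_eq v).symm⟩
    refine ⟨A₁, A₂, _, _, _, B₁, B₂, B₃, B₄, B₅, fun h₀ ↦ hv ?_, rfl, rfl, rfl, h⟩
    simp only [Prod.mk.injEq] at h₀
    simp [h₀]

/-- Characteristic function of the periodic quantum graph associated with the
elongated triangular tiling `(3³,4²)`, with possibly distinct, possibly
non-even edge potentials. -/
theorem elongated_triangular_tiling_characteristic_function
    (θ1 θ2 : ℝ)
    (c1 s1 c1' s1' c2 s2 c2' s2' c3 s3 c3' s3' c4 s4 c4' s4' c5 s5 c5' s5' : ℂ)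
    (hW1 : c1 * s1' - s1 * c1' = 1)
    (hW2 : c2 * s2' - s2 * c2' = 1)
    (hW3 : c3 * s3' - s3 * c3' = 1)
    (hW4 : c4 * s4' - s4 * c4' = 1)
    (hW5 : c5 * s5' - s5 * c5' = 1) :
    (∃ A1 A2 A3 A4 A5 B1 B2 B3 B4 B5 : ℂ,
      (A1, A2, A3, A4, A5, B1, B2, B3, B4, B5) ≠ (0, 0, 0, 0, 0, 0, 0, 0, 0, 0) ∧
      (let α : ℂ := Complex.exp (Complex.I * θ1);
       let β : ℂ := Complex.exp (-(Complex.I * θ2));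
       A1 * c1 + B1 * s1 = A2 * c2 + B2 * s2 ∧
       A2 * c2 + B2 * s2 = α * A2 ∧
       α * A2 = A3 * c3 + B3 * s3 ∧
       A3 * c3 + B3 * s3 = A4 * c4 + B4 * s4 ∧
       (A1 * c1' + B1 * s1') + (A2 * c2' + B2 * s2') - α * B2
         + (A3 * c3' + B3 * s3') + (A4 * c4' + B4 * s4') = 0 ∧
       A4 = A5 * c5 + B5 * s5 ∧
       A5 * c5 + B5 * s5 = α * A3 ∧
       α * A3 = α * A5 ∧
       α * A5 = α * β * A1 ∧
       B4 - (A5 * c5' + B5 * s5') + α * B3 + α * B5 + α * β * B1 = 0))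
    ↔ (s1' * s2 * s3 * s4 + s1 * s2' * s3 * s4 + s1 * s2 * s3' * s4
          + s1 * s2 * s3 * s4') * (c5 + s5' - 2 * (Real.cos θ1 : ℂ))
      + (c1 * s3 * s4 * s5 + c3 * s1 * s4 * s5 + c4 * s1 * s3 * s5
          + c5 * s1 * s3 * s4) * (s2' + c2 - 2 * (Real.cos θ1 : ℂ))
      + s1 * s2 * s5 * (c4' * s3 + c4 * s3' + c3' * s4 + c3 * s4'
          - 2 * (Real.cos θ1 : ℂ))
      + s2 * s3 * s5 * (c1' * s4 + c1 * s4' + s1' * c4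
          - 2 * (Real.cos (θ1 - θ2) : ℂ))
      + s2 * s4 * s5 * (s1' * c3 + c1 * s3' - 2 * (Real.cos θ2 : ℂ))
      + s1 * s3 * s4 * (c2 * s5' - s2' * c5
          - 2 * (c2 + s5') * (Real.cos θ1 : ℂ) + 4 * (Real.cos θ1 : ℂ) ^ 2)
      = 0 := by
  have general := elongated_triangular_tiling_characteristic_function_general
    (Complex.exp_ne_zero (Complex.I * θ1)) (Complex.exp_ne_zero (-(Complex.I * θ2)))
    ⟨c1, s1, c1', s1', hW1⟩ ⟨c2, s2, c2', s2', hW2⟩ ⟨c3, s3, c3', s3', hW3⟩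
    ⟨c4, s4, c4', s4', hW4⟩ ⟨c5, s5, c5', s5', hW5⟩
  rwa [characteristicFunction_exp] at general
end
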